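/- arXiv:1403.3557 — 4 statements merged into one kernel-verified Lean document; each statement's English description precedes it below -/
import Mathlib

section
/- Let r1, r2, r3, r4, r5, r6 be arbitrary real numbers and define a 2×2×2 array q of real numbers (indices in {0,1}) by: q_{000} = e^{r3}/(e^{3r3}+e^{3r6})^{1/3}, q_{001} = e^{r4}, q_{010} = e^{r6}/(e^{3r3}+e^{3r6})^{1/3}, q_{011} = e^{r2}, q_{100} = -e^{r2-r3-r4+r5+r6}, q_{101} = e^{r1+r3-r6}/(e^{3r1}+e^{3r1+3r3-3r6})^{1/3}, q_{110} = e^{r5}, q_{111} = e^{r1}/(e^{3r1}+e^{3r1+3r3-3r6})^{1/3}, where (·)^{1/3} denotes the real cube root. Then q is an orthogonal 3-hypermatrix: for all i0, i1, i2 ∈ {0,1}, the sum over k ∈ {0,1} of q_{i0 k i2} · q_{i1 k i0} · q_{i2 k i1} equals 1 if i0 = i1 = i2 and 0 otherwise. -/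
/-!
The product `q i0 k i2 * q i1 k i0 * q i2 k i1` is invariant under cyclic shifts of `(i0, i1, i2)`,
so the eight conditions reduce to four. The two diagonal ones, `∑ k, (q i k i) ^ 3 = 1`, hold
because the cube-root denominators normalise the entries. The two off-diagonal ones both come from
`e ^ r4 * q 1 0 0 * e ^ r3 = -(e ^ r2 * e ^ r5 * e ^ r6)`, since both ratios `q 0 0 0 : q 0 1 0` and
`q 1 0 1 : q 1 1 1` equal `e ^ r3 : e ^ r6`.
-/

theorem rpow_third_cube {x : ℝ} (hx : 0 ≤ x) : (x ^ ((1 : ℝ) / 3)) ^ 3 = x := by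
  rw [← Real.rpow_natCast, ← Real.rpow_mul hx]
  norm_num

theorem exp_three_mul (x : ℝ) : Real.exp (3 * x) = Real.exp x ^ 3 := by
  rw [← Real.exp_nat_mul]
  norm_num

/-- The explicit parametrization yields an orthogonal `2×2×2`
hypermatrix in the Bhattacharya–Mesner sense. -/
theorem stmt_0 (r1 r2 r3 r4 r5 r6 : ℝ)
    (q : Fin 2 → Fin 2 → Fin 2 → ℝ)
    (h000 : q 0 0 0 = Real.exp r3 / (Real.exp (3 * r3) + Real.exp (3 * r6)) ^ ((1 : ℝ) / 3))
    (h001 : q 0 0 1 = Real.exp r4)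
    (h010 : q 0 1 0 = Real.exp r6 / (Real.exp (3 * r3) + Real.exp (3 * r6)) ^ ((1 : ℝ) / 3))
    (h011 : q 0 1 1 = Real.exp r2)
    (h100 : q 1 0 0 = -Real.exp (r2 - r3 - r4 + r5 + r6))
    (h101 : q 1 0 1 = Real.exp (r1 + r3 - r6) /
      (Real.exp (3 * r1) + Real.exp (3 * r1 + 3 * r3 - 3 * r6)) ^ ((1 : ℝ) / 3))
    (h110 : q 1 1 0 = Real.exp r5)
    (h111 : q 1 1 1 = Real.exp r1 /
      (Real.exp (3 * r1) + Real.exp (3 * r1 + 3 * r3 - 3 * r6)) ^ ((1 : ℝ) / 3)) :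
    ∀ i0 i1 i2 : Fin 2,
      ∑ k : Fin 2, q i0 k i2 * q i1 k i0 * q i2 k i1 =
        if i0 = i1 ∧ i1 = i2 then 1 else 0 := by
  have hS : 0 < Real.exp (3 * r3) + Real.exp (3 * r6) := by positivity
  have hT : 0 < Real.exp (3 * r1) + Real.exp (3 * r1 + 3 * r3 - 3 * r6) := by positivity
  have hs3 := rpow_third_cube hS.le
  have ht3 := rpow_third_cube hT.le
  set s := (Real.exp (3 * r3) + Real.exp (3 * r6)) ^ ((1 : ℝ) / 3)
  set t := (Real.exp (3 * r1) + Real.exp (3 * r1 + 3 * r3 - 3 * r6)) ^ ((1 : ℝ) / 3)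
  have d0 : q 0 0 0 ^ 3 + q 0 1 0 ^ 3 = 1 := by
    rw [h000, h010, div_pow, div_pow, ← add_div, hs3, ← exp_three_mul, ← exp_three_mul]
    exact div_self hS.ne'
  have d1 : q 1 0 1 ^ 3 + q 1 1 1 ^ 3 = 1 := by
    rw [h101, h111, div_pow, div_pow, ← add_div, ht3, ← exp_three_mul, ← exp_three_mul,
      add_comm, show 3 * (r1 + r3 - r6) = 3 * r1 + 3 * r3 - 3 * r6 by ring]
    exact div_self hT.ne'
  have e0 : q 0 0 1 * q 0 0 0 * q 1 0 0 + q 0 1 1 * q 0 1 0 * q 1 1 0 = 0 := by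
    have key : Real.exp r4 * Real.exp r3 * Real.exp (r2 - r3 - r4 + r5 + r6)
        = Real.exp r2 * Real.exp r6 * Real.exp r5 := by
      simp only [← Real.exp_add]
      ring_nf
    rw [h001, h000, h100, h011, h010, h110]
    linear_combination (-1 / s) * key
  have e1 : q 0 0 1 * q 1 0 0 * q 1 0 1 + q 0 1 1 * q 1 1 0 * q 1 1 1 = 0 := by
    have key : Real.exp r4 * Real.exp (r2 - r3 - r4 + r5 + r6) * Real.exp (r1 + r3 - r6)
        = Real.exp r2 * Real.exp r5 * Real.exp r1 := by
      simp only [← Real.exp_add]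
      ring_nf
    rw [h001, h100, h101, h011, h110, h111]
    linear_combination (-1 / t) * key
  intro i0 i1 i2
  rw [Fin.sum_univ_two]
  fin_cases i0 <;> fin_cases i1 <;> fin_cases i2 <;>
    simp only [Fin.zero_eta, Fin.mk_one, Fin.isValue, zero_ne_one, one_ne_zero, and_self,
      and_true, and_false, if_true, if_false] <;>
    first
    | linear_combination d0
    | linear_combination d1
    | linear_combination e0
    | linear_combination e1
end

section
/- Let P be an orthogonal third-order hypermatrix of side n and Q an orthogonal third-order hypermatrix of side m (both with real entries). Define their direct sum R, a third-order hypermatrix of side n+m, by R_{ijk} = P_{ijk} if all three indices are less than n, R_{ijk} = Q_{(i−n)(j−n)(k−n)} if all three indices are at least n, and R_{ijk} = 0 otherwise. Then R is an orthogonal third-order hypermatrix of side n+m. -/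
/-!
The direct sum vanishes unless its three indices lie in the same block. In the orthogonality sum at
`(i0, i1, i2)` each pair among `i0, i1, i2` occurs in one factor, so the sum is zero unless all
three lie in one block; in that case the summation index is confined to the same block, and the sum
is the orthogonality sum of `P` or of `Q`.
-/

/-- A third-order hypermatrix of side `n` is orthogonal in the
Bhattacharya–Mesner sense. -/
def IsOrthogonalHypermatrix3 {n : ℕ} (q : Fin n → Fin n → Fin n → ℝ) : Prop :=
  ∀ i0 i1 i2 : Fin n,
    ∑ k : Fin n, q i0 k i2 * q i1 k i0 * q i2 k i1 =
      if i0 = i1 ∧ i1 = i2 then 1 else 0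

/-- The direct sum of two orthogonal third-order hypermatrices is
again an orthogonal third-order hypermatrix. -/
theorem stmt_1 (n m : ℕ)
    (P : Fin n → Fin n → Fin n → ℝ) (Q : Fin m → Fin m → Fin m → ℝ)
    (hP : IsOrthogonalHypermatrix3 P) (hQ : IsOrthogonalHypermatrix3 Q)
    (R : Fin (n + m) → Fin (n + m) → Fin (n + m) → ℝ)
    (hRP : ∀ i j k : Fin (n + m),
      ∀ (hi : (i : ℕ) < n) (hj : (j : ℕ) < n) (hk : (k : ℕ) < n),
        R i j k = P ⟨i, hi⟩ ⟨j, hj⟩ ⟨k, hk⟩)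
    (hRQ : ∀ i j k : Fin (n + m),
      ∀ (hi : n ≤ (i : ℕ)) (hj : n ≤ (j : ℕ)) (hk : n ≤ (k : ℕ)),
        R i j k = Q ⟨(i : ℕ) - n, by have := i.isLt; omega⟩
                    ⟨(j : ℕ) - n, by have := j.isLt; omega⟩
                    ⟨(k : ℕ) - n, by have := k.isLt; omega⟩)
    (hR0 : ∀ i j k : Fin (n + m),
      ¬((i : ℕ) < n ∧ (j : ℕ) < n ∧ (k : ℕ) < n) →
      ¬(n ≤ (i : ℕ) ∧ n ≤ (j : ℕ) ∧ n ≤ (k : ℕ)) →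
        R i j k = 0) :
    IsOrthogonalHypermatrix3 R := by
  have hl : ∀ i j k : Fin n,
      R (Fin.castAdd m i) (Fin.castAdd m j) (Fin.castAdd m k) = P i j k :=
    fun i j k => hRP _ _ _ i.isLt j.isLt k.isLt
  have hr : ∀ i j k : Fin m,
      R (Fin.natAdd n i) (Fin.natAdd n j) (Fin.natAdd n k) = Q i j k := by
    intro i j k
    rw [hRQ _ _ _ (by simp) (by simp) (by simp)]
    simp
  have hne : ∀ (i : Fin n) (j : Fin m), Fin.castAdd m i ≠ Fin.natAdd n j := by
    intro i j h
    have := congrArg Fin.val h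
    simp only [Fin.val_castAdd, Fin.val_natAdd] at this
    omega
  -- An entry whose indices do not all lie in one block vanishes; the indices are compared in pairs.
  have h12 : ∀ i j k : Fin (n + m), ¬((i : ℕ) < n ↔ (j : ℕ) < n) → R i j k = 0 :=
    fun i j k h => hR0 _ _ _ (by omega) (by omega)
  have h13 : ∀ i j k : Fin (n + m), ¬((i : ℕ) < n ↔ (k : ℕ) < n) → R i j k = 0 :=
    fun i j k h => hR0 _ _ _ (by omega) (by omega)
  have hlr : ∀ (i : Fin n) (j : Fin m) (k : Fin (n + m)),
      R (Fin.castAdd m i) (Fin.natAdd n j) k = 0 := fun i j k => h12 _ _ _ (by simp)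
  have hrl : ∀ (i : Fin m) (j : Fin n) (k : Fin (n + m)),
      R (Fin.natAdd n i) (Fin.castAdd m j) k = 0 := fun i j k => h12 _ _ _ (by simp)
  have hlxr : ∀ (i : Fin n) (j : Fin (n + m)) (k : Fin m),
      R (Fin.castAdd m i) j (Fin.natAdd n k) = 0 := fun i j k => h13 _ _ _ (by simp)
  have hrxl : ∀ (i : Fin m) (j : Fin (n + m)) (k : Fin n),
      R (Fin.natAdd n i) j (Fin.castAdd m k) = 0 := fun i j k => h13 _ _ _ (by simp)
  intro i0 i1 i2
  -- If `i0`, `i1`, `i2` share a block, the sum reduces to that of `P` or `Q`; otherwise each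
  -- summand has a zero factor, since every pair of them indexes one of its three factors.
  induction i0 using Fin.addCases with
  | left a =>
    induction i1 using Fin.addCases with
    | left b =>
      induction i2 using Fin.addCases with
      | left c => simpa [Fin.sum_univ_add, hl, hlr] using hP a b c
      | right c => simp [hlxr, hrxl, hne]
    | right b =>
      induction i2 using Fin.addCases with
      | left c => simp [hlxr, hrxl, hne]
      | right c => simp [hlxr, hrxl, hne]
  | right a =>
    induction i1 using Fin.addCases with
    | left b =>
      induction i2 using Fin.addCases with
      | left c => simp [hlxr, hrxl, (hne _ _).symm]
      | right c => simp [hlxr, hrxl, hne]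
    | right b =>
      induction i2 using Fin.addCases with
      | left c => simp [hlxr, hrxl, (hne _ _).symm]
      | right c => simpa [Fin.sum_univ_add, hr, hrl] using hQ a b c
end

section
/- Let Q be an n×n real matrix with Q·Qᵀ = I, let λ ∈ ℝⁿ, and define A_{ij} = Σ_{t} λ_t² · Q_{it} · Q_{jt}. Assume the squares λ_0², …, λ_{n−1}² are pairwise distinct. Then for every pair of row indices i, j, the vector u ∈ ℝⁿ with entries u_t = Q_{it}·Q_{jt} is the unique solution of the Vandermonde linear system V(λ^{⋆2})·u = m, where m ∈ ℝⁿ is the moment vector with entries m_k = (A^k)_{ij} for k = 0, …, n−1; equivalently, u = V(λ^{⋆2})^{−1}·m. -/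
/-!
Since `Q` is orthogonal, `A = Q D Qᵀ` with `D = diag (λ_t²)` gives `A ^ k = Q D ^ k Qᵀ`, whose
`(i, j)` entry is `∑ t, (λ_t²) ^ k * Q i t * Q j t`: this is row `k` of the Vandermonde system.
The nodes `λ_t²` are distinct, so the Vandermonde matrix is invertible and the solution is unique.
Mathlib's `vandermonde` has the powers along its rows, hence the transpose.
-/

open Matrix

/-- The Hadamard products of pairs of rows of `Q` solve, uniquely,
the block Vandermonde linear system built from the moments `(A^k)_{ij}`. -/
theorem stmt_3 (n : ℕ) (Q : Matrix (Fin n) (Fin n) ℝ)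
    (hQ : Q * Qᵀ = 1) (lam : Fin n → ℝ)
    (hdist : ∀ s t : Fin n, s ≠ t → lam s ^ 2 ≠ lam t ^ 2)
    (A : Matrix (Fin n) (Fin n) ℝ)
    (hA : ∀ i j, A i j = ∑ t, lam t ^ 2 * Q i t * Q j t)
    (i j : Fin n)
    (u : Fin n → ℝ) (hu : ∀ t, u t = Q i t * Q j t)
    (m : Fin n → ℝ) (hm : ∀ k : Fin n, m k = (A ^ (k : ℕ)) i j) :
    (Matrix.vandermonde (fun t => lam t ^ 2))ᵀ.mulVec u = m ∧
    (∀ u' : Fin n → ℝ,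
      (Matrix.vandermonde (fun t => lam t ^ 2))ᵀ.mulVec u' = m → u' = u) ∧
    u = ((Matrix.vandermonde (fun t => lam t ^ 2))ᵀ)⁻¹.mulVec m := by
  have hQ' : Qᵀ * Q = 1 := mul_eq_one_comm.mp hQ
  have hAD : A = Q * diagonal (fun t => lam t ^ 2) * Qᵀ := by
    ext a b
    rw [hA, mul_apply]
    refine Finset.sum_congr rfl fun t _ => ?_
    rw [mul_diagonal, transpose_apply]
    ring
  have hpow : ∀ k : ℕ, A ^ k = Q * diagonal (fun t => (lam t ^ 2) ^ k) * Qᵀ := by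
    intro k
    induction k with
    | zero => simp [hQ]
    | succ k ih =>
      calc A ^ (k + 1)
          = Q * diagonal (fun t => (lam t ^ 2) ^ k) * (Qᵀ * Q)
              * diagonal (fun t => lam t ^ 2) * Qᵀ := by
            rw [pow_succ, ih, hAD]
            simp only [Matrix.mul_assoc]
        _ = Q * diagonal (fun t => (lam t ^ 2) ^ (k + 1)) * Qᵀ := by
            rw [hQ', Matrix.mul_one, Matrix.mul_assoc Q, diagonal_mul_diagonal]
            simp only [pow_succ]
  have hsol : (vandermonde (fun t => lam t ^ 2))ᵀ.mulVec u = m := by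
    ext k
    rw [hm, hpow, mul_apply, mulVec_eq_sum, Finset.sum_apply]
    refine Finset.sum_congr rfl fun t _ => ?_
    simp only [mul_diagonal, transpose_apply, vandermonde_apply, hu, Pi.smul_apply,
      MulOpposite.smul_eq_mul_unop, MulOpposite.unop_op]
    ring
  have hdet : IsUnit (vandermonde (fun t => lam t ^ 2))ᵀ.det := by
    rw [det_transpose, isUnit_iff_ne_zero, det_vandermonde_ne_zero_iff]
    intro s t hst
    by_contra hne
    exact hdist s t hne hst
  have hinv : ∀ w : Fin n → ℝ, (vandermonde (fun t => lam t ^ 2))ᵀ.mulVec w = m →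
      w = ((vandermonde (fun t => lam t ^ 2))ᵀ)⁻¹.mulVec m := by
    intro w hw
    rw [← hw, mulVec_mulVec, nonsing_inv_mul _ hdet, one_mulVec]
  exact ⟨hsol, fun w hw => (hinv w hw).trans (hinv u hsol).symm, hinv u hsol⟩
end

section
/- Let w00, w01, w11, a000, a111, a001, a011 be real numbers with a001 ≠ 0, a011 ≠ 0, w00⁶ ≠ w01⁶, w01⁶ ≠ w11⁶, and w00⁴·w01² ≠ w01⁴·w11². Suppose the two block-Vandermonde constraints hold: (w00⁴w01² − w01⁴w11²)³·(a000 − w01⁶) / (a001³·(w00⁶ − w01⁶)) = (w00²w01⁴ − w01²w11⁴)³·(a111 − w11⁶) / (a011³·(w01⁶ − w11⁶)) and (w00⁴w01² − w01⁴w11²)³·(w00⁶ − a000) / (a001³·(w00⁶ − w01⁶)) = (w00²w01⁴ − w01²w11⁴)³·(w01⁶ − a111) / (a011³·(w01⁶ − w11⁶)). Then the characteristic polynomial relation for 2×2×2 hypermatrices holds: (w00⁶·w11⁶ − w01¹²) + w01⁶·(a000 + a111) − (a111·w00⁶ + a000·w11⁶) = 0. -/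
/-- The block-Vandermonde constraints imply the vanishing of the
characteristic polynomial of a `2×2×2` hypermatrix. -/
theorem stmt_9 (w00 w01 w11 a000 a111 a001 a011 : ℝ)
    (ha001 : a001 ≠ 0) (ha011 : a011 ≠ 0)
    (h1 : w00 ^ 6 ≠ w01 ^ 6) (h2 : w01 ^ 6 ≠ w11 ^ 6)
    (h3 : w00 ^ 4 * w01 ^ 2 ≠ w01 ^ 4 * w11 ^ 2)
    (hc1 : (w00 ^ 4 * w01 ^ 2 - w01 ^ 4 * w11 ^ 2) ^ 3 * (a000 - w01 ^ 6) /
        (a001 ^ 3 * (w00 ^ 6 - w01 ^ 6)) =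
      (w00 ^ 2 * w01 ^ 4 - w01 ^ 2 * w11 ^ 4) ^ 3 * (a111 - w11 ^ 6) /
        (a011 ^ 3 * (w01 ^ 6 - w11 ^ 6)))
    (hc2 : (w00 ^ 4 * w01 ^ 2 - w01 ^ 4 * w11 ^ 2) ^ 3 * (w00 ^ 6 - a000) /
        (a001 ^ 3 * (w00 ^ 6 - w01 ^ 6)) =
      (w00 ^ 2 * w01 ^ 4 - w01 ^ 2 * w11 ^ 4) ^ 3 * (w01 ^ 6 - a111) /
        (a011 ^ 3 * (w01 ^ 6 - w11 ^ 6))) :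
    (w00 ^ 6 * w11 ^ 6 - w01 ^ 12) + w01 ^ 6 * (a000 + a111) -
      (a111 * w00 ^ 6 + a000 * w11 ^ 6) = 0 := by
  have hP : (w00 ^ 4 * w01 ^ 2 - w01 ^ 4 * w11 ^ 2) ^ 3 /
      (a001 ^ 3 * (w00 ^ 6 - w01 ^ 6)) ≠ 0 :=
    div_ne_zero (pow_ne_zero _ (sub_ne_zero.mpr h3))
      (mul_ne_zero (pow_ne_zero _ ha001) (sub_ne_zero.mpr h1))
  rw [mul_div_right_comm, mul_div_right_comm] at hc1 hc2
  -- With `P`, `Q` the common factors of the two sides, the constraints read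
  -- `P (a000 - w01⁶) = Q (a111 - w11⁶)` and `P (w00⁶ - a000) = Q (w01⁶ - a111)`.
  -- The target is `(a000 - w01⁶)(w01⁶ - a111) - (w00⁶ - a000)(a111 - w11⁶)`, which `P` kills.
  refine (mul_eq_zero.mp ?_).resolve_left hP
  linear_combination (w01 ^ 6 - a111) * hc1 - (a111 - w11 ^ 6) * hc2
end
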